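/- Assume F satisfies Assumption F, that μ and σ are bounded, Lipschitz in x uniformly in t and (1/2)-Hölder continuous in t uniformly in x, σ is invertible with bounded inverse, and that g : ℝ^d → ℝ is bounded and Lipschitz. Then there exists a constant C > 0, independent of n, such that for every x ∈ ℝ^d and every grid time t_k = kT/n (k = 0,…,n): |v^h(t_k, x) − g(x)| ≤ C·(T − t_k)^{1/2}. -/

import Mathlib

/-!
The terminal datum `g` is only Lipschitz, so it is replaced by a mollification `φ` at scale `ε`, for
which `|φ - g| = O(ε)` and whose second derivative is `O(1 / ε)` (`exists_scaled_mollifier`). Two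
estimates on one step of the scheme, with time step `h`, are then combined.

* Consistency (`step_consistent`): one step moves `φ` by at most `O(h (1 + 1 / ε))`. The Gaussian
  mean of the weight `H₁` vanishes, `H₂` is orthogonal to affine functions, and Gaussian moments
  scale like powers of `√h`, so the discrete gradient and Hessian of `φ` are controlled by its
  Lipschitz and second-order Taylor constants.
* Stability (`step_stable`): one step expands the sup distance of two bounded functions by a factor
  at most `1 + A h`. By the mean value theorem the difference of two steps is the mean of the
  difference of the data against the weight `1 + h (F_r + F_p · H₁ + F_γ : H₂)`. Assumption F makes
  this weight at least `-O(h)` (`weight_lower`) and its mean is `1 + h F_r`, so its `L¹` norm is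
  `1 + O(h)`.

Iterating over `j` steps (`scheme_bound`) gives, with `τ = j h` the time to maturity,
`|v - g| = O(ε + τ (1 + 1 / ε))`, and the choice `ε = √τ` yields the rate `√τ`.
-/

open MeasureTheory ProbabilityTheory Matrix Real Set Function

noncomputable section

attribute [local instance] Matrix.normedAddCommGroup Matrix.normedSpace

abbrev Vec (d : ℕ) := Fin d → ℝ
abbrev Mat (d : ℕ) := Matrix (Fin d) (Fin d) ℝ

/-- Law of the Gaussian vector `W_h` in `ℝ^d`, centered with covariance `h · I_d`. -/
def gaussVec (d : ℕ) (h : ℝ) : Measure (Vec d) :=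
  Measure.pi fun _ => gaussianReal 0 h.toNNReal

/-- One step Euler scheme `X̂_h^{t,x} = x + μ(t,x) h + σ(t,x) W_h`. -/
def euler {d : ℕ} (μ : ℝ → Vec d → Vec d) (σ : ℝ → Vec d → Mat d)
    (h t : ℝ) (x w : Vec d) : Vec d :=
  x + h • μ t x + (σ t x).mulVec w

/-- Weight `H_1^h(t,x) = (σ(t,x)ᵀ)⁻¹ W_h / h`. -/
def H1w {d : ℕ} (σ : ℝ → Vec d → Mat d) (h t : ℝ) (x w : Vec d) : Vec d :=
  (1 / h) • ((σ t x)ᵀ⁻¹.mulVec w)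

/-- Weight `H_2^h(t,x) = (σ(t,x)ᵀ)⁻¹ (W_h W_hᵀ − h I_d) σ(t,x)⁻¹ / h²`. -/
def H2w {d : ℕ} (σ : ℝ → Vec d → Mat d) (h t : ℝ) (x w : Vec d) : Mat d :=
  (1 / h ^ 2) • ((σ t x)ᵀ⁻¹ * (vecMulVec w w - h • (1 : Mat d)) * (σ t x)⁻¹)

/-- One-step operator acting on the next-time function `ψ`. -/
def step {d : ℕ} (F : ℝ → Vec d → ℝ → Vec d → Mat d → ℝ)
    (μ : ℝ → Vec d → Vec d) (σ : ℝ → Vec d → Mat d)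
    (h t : ℝ) (ψ : Vec d → ℝ) (x : Vec d) : ℝ :=
  (∫ w, ψ (euler μ σ h t x w) ∂gaussVec d h)
    + h * F t x (∫ w, ψ (euler μ σ h t x w) ∂gaussVec d h)
        (fun i => ∫ w, ψ (euler μ σ h t x w) * H1w σ h t x w i ∂gaussVec d h)
        (Matrix.of fun i j => ∫ w, ψ (euler μ σ h t x w) * H2w σ h t x w i j ∂gaussVec d h)

/-- The operator `T_h[ψ](t,x)`. -/
def Th {d : ℕ} (F : ℝ → Vec d → ℝ → Vec d → Mat d → ℝ)
    (μ : ℝ → Vec d → Vec d) (σ : ℝ → Vec d → Mat d)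
    (ψ : ℝ → Vec d → ℝ) (h t : ℝ) (x : Vec d) : ℝ :=
  step F μ σ h t (ψ (t + h)) x

/-- Assumption F of the paper, with explicit partial derivatives `Fr, Fp, Fγ` of `F`
in the variables `(r,p,γ)`. -/
structure AssumptionF (d : ℕ) (σ : ℝ → Vec d → Mat d)
    (F : ℝ → Vec d → ℝ → Vec d → Mat d → ℝ)
    (Fr : ℝ → Vec d → ℝ → Vec d → Mat d → ℝ)
    (Fp : ℝ → Vec d → ℝ → Vec d → Mat d → Vec d)
    (Fγ : ℝ → Vec d → ℝ → Vec d → Mat d → Mat d) : Prop where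
  lipschitz : ∃ L : ℝ, 0 ≤ L ∧ ∀ t x x' r r' p p' γ γ',
    |F t x r p γ - F t x' r' p' γ'| ≤ L * (‖x - x'‖ + |r - r'| + ‖p - p'‖ + ‖γ - γ'‖)
  bound_at_zero : ∃ C : ℝ, ∀ t x, |F t x 0 0 0| ≤ C
  differentiable : ∀ t x r p γ, DifferentiableAt ℝ
    (fun q : ℝ × Vec d × Mat d => F t x q.1 q.2.1 q.2.2) (r, p, γ)
  deriv_eq : ∀ t x r p γ (dq : ℝ × Vec d × Mat d),
    fderiv ℝ (fun q : ℝ × Vec d × Mat d => F t x q.1 q.2.1 q.2.2) (r, p, γ) dq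
      = Fr t x r p γ * dq.1 + Fp t x r p γ ⬝ᵥ dq.2.1
        + ∑ i, ∑ j, Fγ t x r p γ i j * dq.2.2 i j
  psd : ∀ t x r p γ, (Fγ t x r p γ).PosSemidef
  trace_le_one : ∀ t x r p γ, ((σ t x * (σ t x)ᵀ)⁻¹ * Fγ t x r p γ).trace ≤ 1
  lower_bound : ∃ K : ℝ, 0 ≤ K ∧ ∀ t x r p γ (w : Vec d),
    Fp t x r p γ ⬝ᵥ w + w ⬝ᵥ (Fγ t x r p γ).mulVec w ≥ -K

/-- The backward scheme: `schemeAux … k` is the approximation with `k` time steps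
remaining before the horizon `T` (so it corresponds to time `T − k·(T/n)`). -/
def schemeAux {d : ℕ} (T : ℝ) (F : ℝ → Vec d → ℝ → Vec d → Mat d → ℝ)
    (μ : ℝ → Vec d → Vec d) (σ : ℝ → Vec d → Mat d) (g : Vec d → ℝ) (n : ℕ) :
    ℕ → Vec d → ℝ
  | 0 => g
  | (k + 1) => step F μ σ (T / n) (T - (k + 1) * (T / n)) (schemeAux T F μ σ g n k)

/-- The discrete time approximation `v^h(t_i, ·)` with `h = T/n` and `t_i = i·T/n`:
`v^h(t_n,·) = g` and `v^h(t_i,·) = T_h[v^h](t_i,·)`. -/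
def vh {d : ℕ} (T : ℝ) (F : ℝ → Vec d → ℝ → Vec d → Mat d → ℝ)
    (μ : ℝ → Vec d → Vec d) (σ : ℝ → Vec d → Mat d) (g : Vec d → ℝ) (n i : ℕ) :
    Vec d → ℝ :=
  schemeAux T F μ σ g n (n - i)

/-! ### Mollification of Lipschitz functions -/

/-- Convolution of a Lipschitz function with a fixed smooth bump. The map `p` is the derivative of
the convolution; it equals the convolution of the derivative of the bump with `g`, hence inherits a
Lipschitz bound from `g`, which yields the second-order Taylor estimate. -/
theorem exists_mollifier (d : ℕ) : ∃ c : ℝ, 0 ≤ c ∧ ∀ (L : NNReal) (g : Vec d → ℝ),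
    LipschitzWith L g → ∃ (φ : Vec d → ℝ) (p : Vec d → Vec d →L[ℝ] ℝ),
      LipschitzWith L φ ∧ (∀ x, |φ x - g x| ≤ 2 * L) ∧ (∀ x, ‖p x‖ ≤ L) ∧
      ∀ y z, |φ (y + z) - φ y - p y z| ≤ c * L * ‖z‖ ^ 2 := by
  let b : ContDiffBump (0 : Vec d) := ⟨1, 2, one_pos, one_lt_two⟩
  let ρ : Vec d → ℝ := b.normed volume
  have hρc : HasCompactSupport ρ := b.hasCompactSupport_normed
  have hρs : ContDiff ℝ 1 ρ := b.contDiff_normed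
  have hρd : HasCompactSupport (fderiv ℝ ρ) := hρc.fderiv ℝ
  have hρdc : Continuous (fderiv ℝ ρ) := hρs.continuous_fderiv one_ne_zero
  let B := ContinuousLinearMap.lsmul ℝ ℝ (E := ℝ)
  let B' := B.precompL (Vec d)
  have hB' : ∀ (A : Vec d →L[ℝ] ℝ) (r : ℝ), ‖B' A r‖ ≤ ‖A‖ * ‖r‖ := fun A r => by
    refine ContinuousLinearMap.opNorm_le_bound _ (by positivity) fun v => ?_
    simp only [B', B, ContinuousLinearMap.precompL_apply, ContinuousLinearMap.lsmul_apply,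
      norm_smul]
    calc ‖A v‖ * ‖r‖ ≤ ‖A‖ * ‖v‖ * ‖r‖ := by gcongr; exact A.le_opNorm v
      _ = _ := by ring
  have hIρd : Integrable (fun t => ‖fderiv ℝ ρ t‖) (volume : Measure (Vec d)) :=
    (hρdc.integrable_of_hasCompactSupport hρd).norm
  have hIρ : Integrable ρ (volume : Measure (Vec d)) :=
    hρs.continuous.integrable_of_hasCompactSupport hρc
  refine ⟨∫ t, ‖fderiv ℝ ρ t‖, by positivity, fun L g hg => ?_⟩
  have hgl : LocallyIntegrable g (volume : Measure (Vec d)) := hg.continuous.locallyIntegrable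
  have hE1 := hρc.convolutionExists_left (μ := volume) B hρs.continuous hgl
  have hE2 := hρd.convolutionExists_left (μ := volume) B' hρdc hgl
  have hφL : LipschitzWith L (convolution ρ g B volume) := by
    refine LipschitzWith.of_dist_le_mul fun x y => ?_
    rw [dist_eq_norm, convolution_def, convolution_def, ← integral_sub (hE1 x) (hE1 y)]
    refine (norm_integral_le_of_norm_le (g := fun t => ρ t * (L * dist x y))
      (hIρ.mul_const _) (Filter.Eventually.of_forall fun t => ?_)).trans ?_
    · rw [← map_sub]
      have h1 := hg.dist_le_mul (x - t) (y - t)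
      rw [dist_sub_right, dist_eq_norm] at h1
      have h2 : 0 ≤ ρ t := b.nonneg_normed t
      simp only [B, ContinuousLinearMap.lsmul_apply, norm_smul, Real.norm_of_nonneg h2]
      gcongr
    · rw [integral_mul_const]
      have : ∫ t, ρ t = 1 := b.integral_normed
      rw [this, one_mul]
  have hder : ∀ x, HasFDerivAt (convolution ρ g B volume)
      (convolution (fderiv ℝ ρ) g B' volume x) x := fun x =>
    hρc.hasFDerivAt_convolution_left B hρs hgl x
  have hpL : ∀ x y, ‖convolution (fderiv ℝ ρ) g B' volume x
      - convolution (fderiv ℝ ρ) g B' volume y‖ ≤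
      (∫ t, ‖fderiv ℝ ρ t‖) * L * ‖x - y‖ := by
    intro x y
    rw [convolution_def, convolution_def, ← integral_sub (hE2 x) (hE2 y)]
    refine (norm_integral_le_of_norm_le
      (g := fun t => ‖fderiv ℝ ρ t‖ * (L * ‖x - y‖))
      (hIρd.mul_const _) (Filter.Eventually.of_forall fun t => ?_)).trans ?_
    · rw [← map_sub]
      have h1 := hg.dist_le_mul (x - t) (y - t)
      rw [dist_sub_right, dist_eq_norm, dist_eq_norm] at h1
      exact (hB' _ _).trans (by gcongr)
    · rw [integral_mul_const]
      apply le_of_eq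
      ring
  refine ⟨convolution ρ g B volume, convolution (fderiv ℝ ρ) g B' volume, hφL, ?_, ?_, ?_⟩
  · intro x
    have := b.dist_normed_convolution_le (μ := volume) (x₀ := x) (g := g) (ε := 2 * L)
      hg.continuous.aestronglyMeasurable (fun y hy => by
        refine (hg.dist_le_mul y x).trans ?_
        have : dist y x ≤ 2 := (Metric.mem_ball.1 hy).le
        rw [mul_comm]
        gcongr)
    exact this
  · intro x
    rw [← (hder x).fderiv]
    exact norm_fderiv_le_of_lipschitz ℝ hφL
  · intro y z
    have hseg : Convex ℝ (segment ℝ y (y + z)) := convex_segment _ _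
    have := hseg.norm_image_sub_le_of_norm_hasFDerivWithin_le'
      (f := convolution ρ g B volume)
      (f' := convolution (fderiv ℝ ρ) g B' volume)
      (φ := convolution (fderiv ℝ ρ) g B' volume y)
      (C := (∫ t, ‖fderiv ℝ ρ t‖) * L * ‖z‖)
      (fun u _ => (hder u).hasFDerivWithinAt) (fun u hu => by
        refine (hpL u y).trans ?_
        have : ‖u - y‖ ≤ ‖z‖ := by
          have h := norm_sub_le_of_mem_segment hu
          simpa using h
        gcongr) (left_mem_segment ℝ _ _) (right_mem_segment ℝ _ _)
    rw [add_sub_cancel_left, Real.norm_eq_abs] at this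
    refine this.trans (le_of_eq ?_)
    ring

/-- Mollification at scale `ε`: the error is `O(ε)` and the second derivative is `O(1 / ε)`. It is
obtained by applying the unit-scale result to `x ↦ g (ε x)`. -/
theorem exists_scaled_mollifier (d : ℕ) : ∃ c : ℝ, 0 ≤ c ∧ ∀ (L : NNReal) (g : Vec d → ℝ),
    LipschitzWith L g → ∀ ε : ℝ, 0 < ε → ∃ (φ : Vec d → ℝ) (p : Vec d → Vec d →L[ℝ] ℝ),
      LipschitzWith L φ ∧ (∀ x, |φ x - g x| ≤ 2 * L * ε) ∧ (∀ x, ‖p x‖ ≤ L) ∧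
      ∀ y z, |φ (y + z) - φ y - p y z| ≤ c * L / ε * ‖z‖ ^ 2 := by
  obtain ⟨c, hc, H⟩ := exists_mollifier d
  refine ⟨c, hc, fun L g hg ε hε => ?_⟩
  have hs : LipschitzWith (L * ε.toNNReal) (fun x : Vec d => g (ε • x)) := by
    refine LipschitzWith.of_dist_le_mul fun x y => ?_
    refine (hg.dist_le_mul _ _).trans (le_of_eq ?_)
    rw [dist_smul₀, NNReal.coe_mul, Real.coe_toNNReal _ hε.le, Real.norm_of_nonneg hε.le]
    ring
  obtain ⟨φ, p, h1, h2, h3, h4⟩ := H _ _ hs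
  simp only [NNReal.coe_mul, Real.coe_toNNReal _ hε.le] at h2 h3 h4
  refine ⟨fun x => φ (ε⁻¹ • x), fun x => ε⁻¹ • p (ε⁻¹ • x), ?_, ?_, ?_, ?_⟩
  · refine LipschitzWith.of_dist_le_mul fun x y => ?_
    refine (h1.dist_le_mul _ _).trans (le_of_eq ?_)
    rw [dist_smul₀, NNReal.coe_mul, Real.coe_toNNReal _ hε.le, norm_inv,
      Real.norm_of_nonneg hε.le]
    field_simp
  · intro x
    have := h2 (ε⁻¹ • x)
    rw [smul_inv_smul₀ hε.ne'] at this
    linarith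
  · intro x
    rw [norm_smul, norm_inv, Real.norm_of_nonneg hε.le, inv_mul_le_iff₀ hε]
    linarith [h3 (ε⁻¹ • x)]
  · intro y z
    have := h4 (ε⁻¹ • y) (ε⁻¹ • z)
    rw [norm_smul, norm_inv, Real.norm_of_nonneg hε.le, ← smul_add, map_smul] at this
    refine this.trans (le_of_eq ?_)
    field_simp

/-! ### Moments and symmetry of the Gaussian law -/

instance gaussVec_isProb (d : ℕ) (h : ℝ) : IsProbabilityMeasure (gaussVec d h) := by
  unfold gaussVec; infer_instance

theorem integrable_norm_pow (d : ℕ) (h : ℝ) (m : ℕ) (hm : m ≠ 0) :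
    Integrable (fun w : Vec d => ‖w‖ ^ m) (gaussVec d h) := by
  have h1 : Integrable (fun w : Vec d => ∑ i, |w i| ^ m) (gaussVec d h) := by
    refine integrable_finsetSum _ fun i _ => ?_
    refine integrable_comp_eval (μ := fun _ : Fin d => gaussianReal 0 h.toNNReal)
      (f := fun y : ℝ => |y| ^ m) ?_
    have := (memLp_id_gaussianReal (μ := 0) (v := h.toNNReal) (m : NNReal)).integrable_norm_pow
      (p := m) (by exact_mod_cast hm)
    simpa using this
  refine h1.mono' (by fun_prop) (Filter.Eventually.of_forall fun w => ?_)
  rw [Real.norm_of_nonneg (by positivity)]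
  rcases isEmpty_or_nonempty (Fin d) with hd | hd
  · have : w = 0 := Subsingleton.elim _ _
    simp [this, hm]
  · obtain ⟨i, hi⟩ := Finite.exists_max (fun i => |w i|)
    have : ‖w‖ ≤ |w i| := (pi_norm_le_iff_of_nonneg (abs_nonneg _)).2 hi
    calc ‖w‖ ^ m ≤ |w i| ^ m := by gcongr
      _ ≤ _ := Finset.single_le_sum (f := fun i => |w i| ^ m) (fun _ _ => by positivity)
        (Finset.mem_univ i)

theorem gaussVec_eq_map (d : ℕ) {h : ℝ} (hh : 0 ≤ h) :
    gaussVec d h = (gaussVec d 1).map (fun w => Real.sqrt h • w) := by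
  have h1 : gaussianReal 0 h.toNNReal = (gaussianReal 0 (1 : ℝ).toNNReal).map (Real.sqrt h * ·) := by
    rw [gaussianReal_map_const_mul]
    congr 1
    · simp
    · ext; simp [Real.sq_sqrt hh, hh]
  unfold gaussVec
  rw [h1]
  have : ∀ i : Fin d, SigmaFinite ((gaussianReal 0 (1 : ℝ).toNNReal).map (Real.sqrt h * ·)) := by
    intro i; rw [← h1]; infer_instance
  rw [← Measure.pi_map_pi (μ := fun _ : Fin d => gaussianReal 0 (1 : ℝ).toNNReal)
    (f := fun _ => (Real.sqrt h * ·)) (by intro i; fun_prop)]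
  rfl

theorem gaussVec_map_neg (d : ℕ) (h : ℝ) :
    (gaussVec d h).map (fun w => -w) = gaussVec d h := by
  have h1 : (gaussianReal 0 h.toNNReal).map (fun x => -x) = gaussianReal 0 h.toNNReal := by
    rw [gaussianReal_map_neg, neg_zero]
  unfold gaussVec
  have : ∀ i : Fin d, SigmaFinite ((gaussianReal 0 h.toNNReal).map (fun x => -x)) := by
    intro i; rw [h1]; infer_instance
  have h2 := Measure.pi_map_pi (μ := fun _ : Fin d => gaussianReal 0 h.toNNReal)
    (f := fun _ x => -x) (by intro i; fun_prop)
  rw [h1] at h2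
  exact h2

/-- Odd functions have zero Gaussian mean. Integrability is not needed: for a non-integrable `f`
the Bochner integral is zero by convention. -/
theorem integral_odd {d : ℕ} {h : ℝ} {f : Vec d → ℝ} (hf : ∀ w, f (-w) = - f w) :
    ∫ w, f w ∂gaussVec d h = 0 := by
  have h1 : ∫ w, f w ∂gaussVec d h = ∫ w, f (-w) ∂gaussVec d h := by
    conv_lhs => rw [← gaussVec_map_neg]
    exact integral_map_equiv (MeasurableEquiv.neg (Vec d)) f
  simp only [hf, integral_neg] at h1
  linarith

theorem integral_mul_coord {d : ℕ} {h : ℝ} (hh : 0 ≤ h) (i j : Fin d) :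
    ∫ w, w i * w j ∂gaussVec d h = h * (1 : Mat d) i j := by
  by_cases hij : i = j
  · subst hij
    have h1 : ∫ w, w i * w i ∂gaussVec d h = ∫ y : ℝ, y * y ∂gaussianReal 0 h.toNNReal :=
      integral_comp_eval (μ := fun _ : Fin d => gaussianReal 0 h.toNNReal)
        (f := fun y : ℝ => y * y) (by fun_prop)
    have h2 := variance_id_gaussianReal (μ := 0) (v := h.toNNReal)
    rw [variance_of_integral_eq_zero (by fun_prop) (by simp)] at h2
    rw [h1]
    simp only [id, Real.coe_toNNReal _ hh] at h2
    simpa [sq] using h2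
  · have hI : iIndepFun (fun (k : Fin d) (w : Vec d) => w k) (gaussVec d h) :=
      iIndepFun_pi (X := fun _ (y : ℝ) => y) (fun _ => by fun_prop)
    have h3 := (hI.indepFun hij).integral_fun_mul_eq_mul_integral
      (measurable_pi_apply i).aestronglyMeasurable (measurable_pi_apply j).aestronglyMeasurable
    rw [h3, integral_odd (by simp)]
    simp [hij]

theorem integral_norm_pow {d : ℕ} {h : ℝ} (hh : 0 ≤ h) (m : ℕ) :
    ∫ w, ‖w‖ ^ m ∂gaussVec d h = Real.sqrt h ^ m * ∫ w, ‖w‖ ^ m ∂gaussVec d 1 := by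
  rw [gaussVec_eq_map d hh, integral_map (by fun_prop) (by fun_prop), ← integral_const_mul]
  refine integral_congr_ae (Filter.Eventually.of_forall fun w => ?_)
  simp only [norm_smul, Real.norm_of_nonneg (Real.sqrt_nonneg h), mul_pow]

/-! ### The weights `H₁` and `H₂` -/

theorem norm_mulVec_le {d : ℕ} (A : Mat d) (w : Vec d) : ‖A.mulVec w‖ ≤ d * ‖A‖ * ‖w‖ := by
  refine (pi_norm_le_iff_of_nonneg (by positivity)).2 fun i => ?_
  have : ∀ j ∈ Finset.univ, ‖A i j * w j‖ ≤ ‖A‖ * ‖w‖ := fun j _ => by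
    rw [norm_mul]
    gcongr
    · exact Matrix.norm_entry_le_entrywise_sup_norm A
    · exact norm_le_pi_norm w j
  refine (norm_sum_le_of_le _ this).trans (le_of_eq ?_)
  simp [mul_assoc]

theorem norm_inv_transpose {d : ℕ} (A : Mat d) : ‖Aᵀ⁻¹‖ = ‖A⁻¹‖ := by
  rw [← Matrix.transpose_nonsing_inv, Matrix.norm_transpose]

/-- In coordinates, `H₂ = H₁ H₁ᵀ - a⁻¹ / h` with `a = σ σᵀ`. -/
theorem H2w_eq {d : ℕ} (σ : ℝ → Vec d → Mat d) {h : ℝ} (hh : h ≠ 0) (t : ℝ) (x w : Vec d)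
    (i j : Fin d) : H2w σ h t x w i j =
      H1w σ h t x w i * H1w σ h t x w j - (1 / h) * (σ t x * (σ t x)ᵀ)⁻¹ i j := by
  unfold H2w H1w
  have h1 : w ᵥ* (σ t x)⁻¹ = (σ t x)ᵀ⁻¹ *ᵥ w := by
    rw [← Matrix.transpose_nonsing_inv, Matrix.mulVec_transpose]
  rw [Matrix.mul_sub, Matrix.sub_mul, Matrix.mul_vecMulVec, Matrix.vecMulVec_mul, h1,
    Matrix.mul_smul, Matrix.smul_mul, Matrix.mul_one, Matrix.mul_inv_rev]
  simp only [Matrix.smul_apply, Matrix.sub_apply, Matrix.vecMulVec_apply, Pi.smul_apply,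
    smul_eq_mul]
  field_simp

theorem H1w_bound {d : ℕ} {σ : ℝ → Vec d → Mat d} {s : ℝ} (hs : ∀ t x, ‖(σ t x)⁻¹‖ ≤ s)
    {h : ℝ} (hh : 0 < h) (t : ℝ) (x w : Vec d) (i : Fin d) :
    |H1w σ h t x w i| ≤ (d * s) / h * ‖w‖ := by
  have h1 : |H1w σ h t x w i| ≤ ‖H1w σ h t x w‖ := norm_le_pi_norm (H1w σ h t x w) i
  refine h1.trans ?_
  unfold H1w
  rw [norm_smul, Real.norm_of_nonneg (by positivity)]
  calc 1 / h * ‖(σ t x)ᵀ⁻¹ *ᵥ w‖ ≤ 1 / h * (d * ‖(σ t x)ᵀ⁻¹‖ * ‖w‖) := by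
        gcongr; exact norm_mulVec_le _ _
    _ ≤ 1 / h * (d * s * ‖w‖) := by
        rw [norm_inv_transpose]; gcongr; exact hs t x
    _ = _ := by ring

theorem H2w_bound {d : ℕ} {σ : ℝ → Vec d → Mat d} {s : ℝ} (hs : ∀ t x, ‖(σ t x)⁻¹‖ ≤ s)
    {h : ℝ} (hh : 0 < h) (t : ℝ) (x w : Vec d) (i j : Fin d) :
    |H2w σ h t x w i j| ≤ (d * s) ^ 2 / h ^ 2 * ‖w‖ ^ 2 + d * s ^ 2 / h := by
  have hs0 : 0 ≤ s := (norm_nonneg _).trans (hs t x)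
  rw [H2w_eq σ hh.ne']
  refine (abs_sub _ _).trans ?_
  rw [abs_mul, abs_mul]
  have h1 : |H1w σ h t x w i| * |H1w σ h t x w j| ≤
      ((d * s) / h * ‖w‖) * ((d * s) / h * ‖w‖) := by
    gcongr
    · exact H1w_bound hs hh t x w i
    · exact H1w_bound hs hh t x w j
  have h2 : |(σ t x * (σ t x)ᵀ)⁻¹ i j| ≤ d * s ^ 2 := by
    rw [Matrix.mul_inv_rev, Matrix.mul_apply]
    have : ∀ k ∈ Finset.univ, ‖(σ t x)ᵀ⁻¹ i k * (σ t x)⁻¹ k j‖ ≤ s * s := fun k _ => by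
      rw [norm_mul]
      gcongr
      · exact (Matrix.norm_entry_le_entrywise_sup_norm _).trans
          ((norm_inv_transpose _).le.trans (hs t x))
      · exact (Matrix.norm_entry_le_entrywise_sup_norm _).trans (hs t x)
    refine (norm_sum_le_of_le _ this).trans (le_of_eq ?_)
    simp [sq]
  rw [abs_of_pos (by positivity : 0 < 1 / h)]
  calc _ ≤ ((d * s) / h * ‖w‖) * ((d * s) / h * ‖w‖) + 1 / h * (d * s ^ 2) := by gcongr
    _ = _ := by ring

theorem continuous_inv_mat {d : ℕ} {σ : ℝ → Vec d → Mat d} {t : ℝ} (hσ : Continuous (σ t))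
    (hinv : ∀ s y, IsUnit (σ s y).det) : Continuous fun y => (σ t y)⁻¹ := by
  simp only [Matrix.inv_def, Ring.inverse_eq_inv']
  have h1 : Continuous fun y => (σ t y).det := hσ.matrix_det
  have h2 : Continuous fun y => (σ t y).adjugate := hσ.matrix_adjugate
  exact (h1.inv₀ fun y => (hinv t y).ne_zero).smul h2

theorem continuous_H1w {d : ℕ} {σ : ℝ → Vec d → Mat d} {t : ℝ} (hσ : Continuous (σ t))
    (hinv : ∀ s y, IsUnit (σ s y).det) (h : ℝ) :
    Continuous (fun q : Vec d × Vec d => H1w σ h t q.1 q.2) := by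
  have h3 : Continuous fun q : Vec d × Vec d => (σ t q.1)⁻¹ :=
    (continuous_inv_mat hσ hinv).comp continuous_fst
  unfold H1w
  simp only [← Matrix.transpose_nonsing_inv]
  have h4 : Continuous fun q : Vec d × Vec d => (σ t q.1)⁻¹ᵀ *ᵥ q.2 :=
    h3.matrix_transpose.matrix_mulVec continuous_snd
  exact h4.const_smul (1 / h)

theorem continuous_H2w {d : ℕ} {σ : ℝ → Vec d → Mat d} {t : ℝ} (hσ : Continuous (σ t))
    (hinv : ∀ s y, IsUnit (σ s y).det) {h : ℝ} (hh : h ≠ 0) (i j : Fin d) :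
    Continuous (fun q : Vec d × Vec d => H2w σ h t q.1 q.2 i j) := by
  have h3 : Continuous fun q : Vec d × Vec d => (σ t q.1)⁻¹ :=
    (continuous_inv_mat hσ hinv).comp continuous_fst
  have h1 := fun i => (continuous_pi_iff.1 (continuous_H1w hσ hinv h)) i
  have h2 : Continuous fun q : Vec d × Vec d => ((σ t q.1)⁻¹ᵀ * (σ t q.1)⁻¹) i j :=
    (h3.matrix_transpose.matrix_mul h3).matrix_elem i j
  simp only [H2w_eq σ hh, Matrix.mul_inv_rev, ← Matrix.transpose_nonsing_inv]
  exact ((h1 i).mul (h1 j)).sub (continuous_const.mul h2)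

theorem continuous_euler {d : ℕ} {μ : ℝ → Vec d → Vec d} {σ : ℝ → Vec d → Mat d} {t : ℝ}
    (hμ : Continuous (μ t)) (hσ : Continuous (σ t)) (h : ℝ) :
    Continuous (fun q : Vec d × Vec d => euler μ σ h t q.1 q.2) := by
  unfold euler
  have h1 : Continuous fun q : Vec d × Vec d => μ t q.1 := hμ.comp continuous_fst
  have h2 : Continuous fun q : Vec d × Vec d => σ t q.1 *ᵥ q.2 :=
    (hσ.comp continuous_fst).matrix_mulVec continuous_snd
  exact (continuous_fst.add (h1.const_smul h)).add h2

theorem integral_H1w {d : ℕ} (σ : ℝ → Vec d → Mat d) (h t : ℝ) (x : Vec d) (i : Fin d) :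
    ∫ w, H1w σ h t x w i ∂gaussVec d h = 0 :=
  integral_odd fun w => by simp [H1w, Matrix.mulVec_neg]

theorem integral_H2w {d : ℕ} {σ : ℝ → Vec d → Mat d} {h : ℝ} (hh : 0 < h) (t : ℝ)
    (x : Vec d) (i j : Fin d) :
    ∫ w, H2w σ h t x w i j ∂gaussVec d h = 0 := by
  set Q := (σ t x)ᵀ⁻¹ with hQ
  have hI : ∀ k l : Fin d, Integrable (fun w : Vec d => w k * w l) (gaussVec d h) := by
    intro k l
    refine (integrable_norm_pow d h 2 (by norm_num)).mono' (by fun_prop)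
      (Filter.Eventually.of_forall fun w => ?_)
    rw [norm_mul, sq]
    exact mul_le_mul (norm_le_pi_norm w k) (norm_le_pi_norm w l) (norm_nonneg _) (norm_nonneg _)
  have h1 : ∀ w, H2w σ h t x w i j = (1 / h ^ 2) * (∑ k, ∑ l, (Q i k * Q j l) * (w k * w l))
      - (1 / h) * (σ t x * (σ t x)ᵀ)⁻¹ i j := fun w => by
    rw [H2w_eq σ hh.ne']
    congr 1
    simp only [H1w, ← hQ, Pi.smul_apply, smul_eq_mul, Matrix.mulVec, dotProduct]
    rw [mul_mul_mul_comm, Finset.sum_mul_sum]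
    congr 1
    · ring
    · exact Finset.sum_congr rfl fun k _ => Finset.sum_congr rfl fun l _ => by ring
  simp only [h1]
  rw [integral_sub]
  · rw [integral_const_mul, integral_finsetSum]
    · simp only [integral_finsetSum _ fun l _ => (hI _ l).const_mul _, integral_const_mul,
        integral_mul_coord hh.le, integral_const, probReal_univ, one_smul, Matrix.one_apply]
      have h2 : (σ t x * (σ t x)ᵀ)⁻¹ i j = ∑ k, Q i k * Q j k := by
        rw [Matrix.mul_inv_rev, Matrix.mul_apply]
        refine Finset.sum_congr rfl fun k _ => ?_
        rw [hQ, ← Matrix.transpose_nonsing_inv]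
        simp
      rw [h2]
      simp only [mul_ite, mul_one, mul_zero, Finset.sum_ite_eq, Finset.mem_univ, if_true]
      rw [← Finset.sum_mul]
      field_simp
      ring
    · exact fun k _ => integrable_finsetSum _ fun l _ => (hI k l).const_mul _
  · exact (integrable_finsetSum _ fun k _ => integrable_finsetSum _ fun l _ =>
      (hI k l).const_mul _).const_mul _
  · exact integrable_const _

/-! ### Stability of one step -/

theorem integrable_H1w {d : ℕ} {σ : ℝ → Vec d → Mat d} {s : ℝ} (hs : ∀ t x, ‖(σ t x)⁻¹‖ ≤ s)
    {h : ℝ} (hh : 0 < h) (t : ℝ) (x : Vec d) (i : Fin d) :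
    Integrable (fun w => H1w σ h t x w i) (gaussVec d h) := by
  have hc : Continuous fun w => H1w σ h t x w i := by unfold H1w; fun_prop
  have hc' : AEStronglyMeasurable (fun w => H1w σ h t x w i) (gaussVec d h) :=
    hc.measurable.aestronglyMeasurable
  refine ((integrable_norm_pow d h 1 one_ne_zero).const_mul ((d * s) / h)).mono' hc'
    (Filter.Eventually.of_forall fun w => ?_)
  simpa using H1w_bound hs hh t x w i

theorem integrable_H2w {d : ℕ} {σ : ℝ → Vec d → Mat d} {s : ℝ} (hs : ∀ t x, ‖(σ t x)⁻¹‖ ≤ s)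
    {h : ℝ} (hh : 0 < h) (t : ℝ) (x : Vec d) (i j : Fin d) :
    Integrable (fun w => H2w σ h t x w i j) (gaussVec d h) := by
  have hc : Continuous fun w => H2w σ h t x w i j := by unfold H2w; fun_prop
  have hc' : AEStronglyMeasurable (fun w => H2w σ h t x w i j) (gaussVec d h) :=
    hc.measurable.aestronglyMeasurable
  refine (((integrable_norm_pow d h 2 two_ne_zero).const_mul ((d * s) ^ 2 / h ^ 2)).add
    (integrable_const (d * s ^ 2 / h))).mono' hc' (Filter.Eventually.of_forall fun w => ?_)
  exact H2w_bound hs hh t x w i j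

/-- The random weight `1 + h (c + b · H₁ + G : H₂)` through which the linearization of one step of
the scheme, with derivatives `c, b, G` of `F` in `(r, p, γ)`, acts on the next-time function. -/
def weight {d : ℕ} (σ : ℝ → Vec d → Mat d) (h t : ℝ) (x : Vec d) (c : ℝ) (b : Vec d) (G : Mat d)
    (w : Vec d) : ℝ :=
  1 + h * (c + b ⬝ᵥ H1w σ h t x w + ∑ i, ∑ j, G i j * H2w σ h t x w i j)

theorem integral_mul_weight {d : ℕ} {σ : ℝ → Vec d → Mat d} {h t : ℝ} {x : Vec d} {f : Vec d → ℝ}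
    (h0 : Integrable f (gaussVec d h))
    (h1 : ∀ i, Integrable (fun w => f w * H1w σ h t x w i) (gaussVec d h))
    (h2 : ∀ i j, Integrable (fun w => f w * H2w σ h t x w i j) (gaussVec d h))
    (c : ℝ) (b : Vec d) (G : Mat d) :
    Integrable (fun w => f w * weight σ h t x c b G w) (gaussVec d h) ∧
    ∫ w, f w * weight σ h t x c b G w ∂gaussVec d h = ∫ w, f w ∂gaussVec d h
      + h * (c * (∫ w, f w ∂gaussVec d h)
        + b ⬝ᵥ (fun i => ∫ w, f w * H1w σ h t x w i ∂gaussVec d h)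
        + ∑ i, ∑ j, G i j * ∫ w, f w * H2w σ h t x w i j ∂gaussVec d h) := by
  have e : ∀ w, f w * weight σ h t x c b G w = f w + h * (c * f w
      + (∑ i, b i * (f w * H1w σ h t x w i))
      + ∑ i, ∑ j, G i j * (f w * H2w σ h t x w i j)) := fun w => by
    unfold weight
    have e1 : ∑ i, b i * (f w * H1w σ h t x w i) = f w * (b ⬝ᵥ H1w σ h t x w) := by
      simp only [dotProduct, Finset.mul_sum]
      exact Finset.sum_congr rfl fun i _ => by ring
    have e2 : ∑ i, ∑ j, G i j * (f w * H2w σ h t x w i j)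
        = f w * ∑ i, ∑ j, G i j * H2w σ h t x w i j := by
      simp only [Finset.mul_sum]
      exact Finset.sum_congr rfl fun i _ => Finset.sum_congr rfl fun j _ => by ring
    rw [e1, e2]
    ring
  simp only [e]
  have i1 : Integrable (fun w => ∑ i, b i * (f w * H1w σ h t x w i)) (gaussVec d h) :=
    integrable_finsetSum _ fun i _ => (h1 i).const_mul _
  have i2' : ∀ i, Integrable (fun w => ∑ j, G i j * (f w * H2w σ h t x w i j)) (gaussVec d h) :=
    fun i => integrable_finsetSum _ fun j _ => (h2 i j).const_mul _
  have i2 : Integrable (fun w => ∑ i, ∑ j, G i j * (f w * H2w σ h t x w i j)) (gaussVec d h) :=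
    integrable_finsetSum _ fun i _ => i2' i
  have i3 := ((h0.const_mul c).add i1).add i2
  refine ⟨h0.add (i3.const_mul h), ?_⟩
  refine (integral_add h0 (i3.const_mul h)).trans ?_
  rw [integral_const_mul]
  congr 2
  refine (integral_add ((h0.const_mul c).add i1) i2).trans ?_
  congr 1
  · refine (integral_add (h0.const_mul c) i1).trans ?_
    rw [integral_const_mul, integral_finsetSum _ fun i _ => (h1 i).const_mul _]
    simp only [integral_const_mul, dotProduct]
  · rw [integral_finsetSum _ fun i _ => i2' i]
    refine Finset.sum_congr rfl fun i _ => ?_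
    rw [integral_finsetSum _ fun j _ => (h2 i j).const_mul _]
    simp only [integral_const_mul]

/-- Since `H₂ = H₁ H₁ᵀ - a⁻¹ / h`, the weight equals
`(1 - Tr (a⁻¹ G)) + h (c + b · v + vᵀ G v)` at `v = H₁`: the trace condition makes the first bracket
nonnegative, and the lower bound on `b · v + vᵀ G v` controls the second. -/
theorem weight_lower {d : ℕ} {σ : ℝ → Vec d → Mat d} {h : ℝ} (hh : 0 < h) {t : ℝ} {x : Vec d}
    {c R K : ℝ} {b : Vec d} {G : Mat d} (hc : |c| ≤ R)
    (htr : ((σ t x * (σ t x)ᵀ)⁻¹ * G).trace ≤ 1)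
    (hK : ∀ v : Vec d, b ⬝ᵥ v + v ⬝ᵥ G.mulVec v ≥ -K) (w : Vec d) :
    -(h * (R + K)) ≤ weight σ h t x c b G w := by
  unfold weight
  set v := H1w σ h t x w with hv
  set A := (σ t x * (σ t x)ᵀ)⁻¹ with hA
  have hAsym : ∀ i j, A j i = A i j := fun i j => by
    have : Aᵀ = A := by
      rw [hA, Matrix.transpose_nonsing_inv, Matrix.transpose_mul, Matrix.transpose_transpose]
    rw [← Matrix.transpose_apply A, this]
  have e : ∑ i, ∑ j, G i j * H2w σ h t x w i j = v ⬝ᵥ G.mulVec v - (1 / h) * (A * G).trace := by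
    simp only [H2w_eq σ hh.ne', ← hv, ← hA]
    simp only [mul_sub, Finset.sum_sub_distrib]
    congr 1
    · simp only [dotProduct, Matrix.mulVec, Finset.mul_sum]
      exact Finset.sum_congr rfl fun i _ => Finset.sum_congr rfl fun j _ => by ring
    · simp only [Matrix.trace, Matrix.diag, Matrix.mul_apply, Finset.mul_sum]
      rw [Finset.sum_comm]
      exact Finset.sum_congr rfl fun i _ => Finset.sum_congr rfl fun j _ => by
        rw [hAsym j i]; ring
  rw [e]
  have h1 := hK v
  have h2 := neg_le_of_abs_le hc
  have h3 : 1 + h * (c + b ⬝ᵥ v + (v ⬝ᵥ G.mulVec v - (1 / h) * (A * G).trace))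
      = (1 - (A * G).trace) + h * (c + (b ⬝ᵥ v + v ⬝ᵥ G.mulVec v)) := by
    field_simp
    ring
  rw [h3]
  have h4 : h * (-R + -K) ≤ h * (c + (b ⬝ᵥ v + v ⬝ᵥ G.mulVec v)) := by gcongr
  linarith

theorem abs_Fr_le {d : ℕ} {σ : ℝ → Vec d → Mat d} {F Fr : ℝ → Vec d → ℝ → Vec d → Mat d → ℝ}
    {Fp : ℝ → Vec d → ℝ → Vec d → Mat d → Vec d} {Fγ : ℝ → Vec d → ℝ → Vec d → Mat d → Mat d}
    (hF : AssumptionF d σ F Fr Fp Fγ) : ∃ R : ℝ, 0 ≤ R ∧ ∀ t x r p γ, |Fr t x r p γ| ≤ R := by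
  obtain ⟨L, hL, hl⟩ := hF.lipschitz
  refine ⟨L, hL, fun t x r p γ => ?_⟩
  have hd : HasFDerivAt (fun q : ℝ × Vec d × Mat d => F t x q.1 q.2.1 q.2.2) _ (r, p, γ) :=
    (hF.differentiable t x r p γ).hasFDerivAt
  have h1 : HasDerivAt (fun s : ℝ => ((s, p, γ) : ℝ × Vec d × Mat d)) (1, 0, 0) r :=
    (hasDerivAt_id r).prodMk ((hasDerivAt_const r p).prodMk (hasDerivAt_const r γ))
  have h2 := hd.comp_hasDerivAt r h1
  have h6 := hF.deriv_eq t x r p γ (1, 0, 0)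
  have h3 : LipschitzWith L.toNNReal (fun s : ℝ => F t x s p γ) :=
    LipschitzWith.of_dist_le_mul fun s s' => by
      rw [Real.coe_toNNReal _ hL, Real.dist_eq, Real.dist_eq]
      simpa using hl t x x s s' p p γ γ
  have h4 := norm_deriv_le_of_lipschitz (x₀ := r) h3
  have h5 : deriv (fun s : ℝ => F t x s p γ) r = _ := h2.deriv.trans h6
  rw [h5, Real.coe_toNNReal _ hL] at h4
  simpa using h4

/-- Stability of one step: the weight has mean `1 + h c` and is bounded below by `-O(h)`, so its
`L¹` norm is `1 + O(h)`. -/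
theorem step_stable {d : ℕ} {μ : ℝ → Vec d → Vec d} {σ : ℝ → Vec d → Mat d}
    (hμ : ∀ t, Continuous (μ t)) (hσ : ∀ t, Continuous (σ t))
    {s : ℝ} (hs : ∀ t x, ‖(σ t x)⁻¹‖ ≤ s)
    {F Fr : ℝ → Vec d → ℝ → Vec d → Mat d → ℝ}
    {Fp : ℝ → Vec d → ℝ → Vec d → Mat d → Vec d} {Fγ : ℝ → Vec d → ℝ → Vec d → Mat d → Mat d}
    (hF : AssumptionF d σ F Fr Fp Fγ) :
    ∃ A : ℝ, 0 ≤ A ∧ ∀ h : ℝ, 0 < h → ∀ (t : ℝ) (ψ φ : Vec d → ℝ) (B M : ℝ),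
      Measurable ψ → Measurable φ → (∀ x, |ψ x| ≤ B) → (∀ x, |φ x| ≤ B) →
      (∀ x, |ψ x - φ x| ≤ M) → ∀ x, |step F μ σ h t ψ x - step F μ σ h t φ x| ≤ (1 + A * h) * M := by
  obtain ⟨R, hR, hFr⟩ := abs_Fr_le hF
  obtain ⟨K, hK, hlow⟩ := hF.lower_bound
  refine ⟨3 * R + 2 * K, by positivity, fun h hh t ψ φ B M hψ hφ hψB hφB hM x => ?_⟩
  have hX : Measurable fun w => euler μ σ h t x w :=
    ((continuous_euler (hμ t) (hσ t) h).comp (Continuous.prodMk_right x)).measurable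
  have key : ∀ f : Vec d → ℝ, Measurable f → (∀ x, |f x| ≤ B) →
      Integrable (fun w => f (euler μ σ h t x w)) (gaussVec d h) ∧
      (∀ i, Integrable (fun w => f (euler μ σ h t x w) * H1w σ h t x w i) (gaussVec d h)) ∧
      (∀ i j, Integrable (fun w => f (euler μ σ h t x w) * H2w σ h t x w i j)
        (gaussVec d h)) := by
    intro f hf hfB
    have hm : AEStronglyMeasurable (fun w => f (euler μ σ h t x w)) (gaussVec d h) :=
      (hf.comp hX).aestronglyMeasurable
    have hb : ∀ᵐ w ∂gaussVec d h, ‖f (euler μ σ h t x w)‖ ≤ B :=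
      Filter.Eventually.of_forall fun w => hfB _
    exact ⟨(integrable_const B).mono' hm hb,
      fun i => (integrable_H1w hs hh t x i).bdd_mul hm hb,
      fun i j => (integrable_H2w hs hh t x i j).bdd_mul hm hb⟩
  obtain ⟨a0, a1, a2⟩ := key ψ hψ hψB
  obtain ⟨b0, b1, b2⟩ := key φ hφ hφB
  -- the mean value theorem in the variables `(r, p, γ)`
  obtain ⟨z, -, hz⟩ := domain_mvt (s := univ)
    (f := fun q : ℝ × Vec d × Mat d => F t x q.1 q.2.1 q.2.2)
    (f' := fun q => fderiv ℝ (fun q : ℝ × Vec d × Mat d => F t x q.1 q.2.1 q.2.2) q)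
    (x := (∫ w, φ (euler μ σ h t x w) ∂gaussVec d h,
      (fun i => ∫ w, φ (euler μ σ h t x w) * H1w σ h t x w i ∂gaussVec d h),
      Matrix.of fun i j => ∫ w, φ (euler μ σ h t x w) * H2w σ h t x w i j ∂gaussVec d h))
    (y := (∫ w, ψ (euler μ σ h t x w) ∂gaussVec d h,
      (fun i => ∫ w, ψ (euler μ σ h t x w) * H1w σ h t x w i ∂gaussVec d h),
      Matrix.of fun i j => ∫ w, ψ (euler μ σ h t x w) * H2w σ h t x w i j ∂gaussVec d h))
    (fun q _ => (hF.differentiable t x q.1 q.2.1 q.2.2).hasFDerivAt.hasFDerivWithinAt)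
    convex_univ (mem_univ _) (mem_univ _)
  replace hz := hz.trans (hF.deriv_eq t x z.1 z.2.1 z.2.2 _)
  simp only [Prod.mk_sub_mk] at hz
  set c := Fr t x z.1 z.2.1 z.2.2
  set b := Fp t x z.1 z.2.1 z.2.2
  set G := Fγ t x z.1 z.2.1 z.2.2
  let δ : Vec d → ℝ := fun w => ψ (euler μ σ h t x w) - φ (euler μ σ h t x w)
  have d1 : ∀ i, (fun w => δ w * H1w σ h t x w i) = fun w =>
      ψ (euler μ σ h t x w) * H1w σ h t x w i - φ (euler μ σ h t x w) * H1w σ h t x w i :=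
    fun i => funext fun w => sub_mul _ _ _
  have d2 : ∀ i j, (fun w => δ w * H2w σ h t x w i j) = fun w =>
      ψ (euler μ σ h t x w) * H2w σ h t x w i j - φ (euler μ σ h t x w) * H2w σ h t x w i j :=
    fun i j => funext fun w => sub_mul _ _ _
  obtain ⟨i1, e1⟩ := integral_mul_weight (σ := σ) (t := t) (x := x) (f := δ) (a0.sub b0)
    (fun i => by rw [d1]; exact (a1 i).sub (b1 i))
    (fun i j => by rw [d2]; exact (a2 i j).sub (b2 i j)) c b G
  obtain ⟨i2, e2⟩ := integral_mul_weight (σ := σ) (h := h) (t := t) (x := x) (f := fun _ => 1)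
    (integrable_const _)
    (fun i => by simpa using integrable_H1w hs hh t x i)
    (fun i j => by simpa using integrable_H2w hs hh t x i j) c b G
  have e3 : ∫ w, weight σ h t x c b G w ∂gaussVec d h = 1 + h * c := by
    simpa [integral_H1w, integral_H2w hh, dotProduct] using e2
  have i3 : Integrable (fun w => weight σ h t x c b G w) (gaussVec d h) := by simpa using i2
  have e4 : step F μ σ h t ψ x - step F μ σ h t φ x
      = ∫ w, δ w * weight σ h t x c b G w ∂gaussVec d h := by
    rw [e1]
    unfold step
    simp only [d1, d2, δ, integral_sub a0 b0, fun i => integral_sub (a1 i) (b1 i),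
      fun i j => integral_sub (a2 i j) (b2 i j)]
    have hz' := hz
    simp only [Matrix.sub_apply, Matrix.of_apply] at hz'
    have : ∀ p q u v : ℝ, p + h * u - (q + h * v) = (p - q) + h * (u - v) := fun _ _ _ _ => by ring
    rw [this, hz']
    rfl
  have hlb : ∀ w, -(h * (R + K)) ≤ weight σ h t x c b G w :=
    weight_lower hh (hFr _ _ _ _ _) (hF.trace_le_one t x _ _ _) (hlow t x _ _ _)
  have hM0 : 0 ≤ M := (abs_nonneg _).trans (hM x)
  rw [e4, ← Real.norm_eq_abs]
  have hRK : 0 ≤ h * (R + K) := by positivity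
  refine (norm_integral_le_of_norm_le
    (g := fun w => M * (weight σ h t x c b G w + 2 * (h * (R + K))))
    ((i3.add (integrable_const _)).const_mul M) (Filter.Eventually.of_forall fun w => ?_)).trans ?_
  · rw [norm_mul]
    refine mul_le_mul (hM _) ?_ (norm_nonneg _) hM0
    rw [Real.norm_eq_abs, abs_le]
    constructor <;> linarith [hlb w]
  · rw [integral_const_mul, integral_add i3 (integrable_const _), e3]
    simp only [integral_const, probReal_univ, one_smul]
    have := (abs_le.1 (hFr t x z.1 z.2.1 z.2.2)).2
    have h5 : h * c ≤ h * R := by gcongr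
    rw [mul_comm]
    exact mul_le_mul_of_nonneg_right (by linarith) hM0

/-! ### Consistency of one step -/

/-- Consistency of one step on a test function `φ` that is `P`-Lipschitz and satisfies a
second-order Taylor estimate with constant `M`. The discrete gradient and Hessian of `φ` remain
bounded because `H₁` kills constants and `H₂` kills affine functions. -/
theorem step_consistent {d : ℕ} {μ : ℝ → Vec d → Vec d} {σ : ℝ → Vec d → Mat d}
    {m s₀ s : ℝ} (hμb : ∀ t x, ‖μ t x‖ ≤ m) (hσb : ∀ t x, ‖σ t x‖ ≤ s₀)
    (hs : ∀ t x, ‖(σ t x)⁻¹‖ ≤ s)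
    {F Fr : ℝ → Vec d → ℝ → Vec d → Mat d → ℝ}
    {Fp : ℝ → Vec d → ℝ → Vec d → Mat d → Vec d} {Fγ : ℝ → Vec d → ℝ → Vec d → Mat d → Mat d}
    (hF : AssumptionF d σ F Fr Fp Fγ) :
    ∃ D : ℝ, 0 ≤ D ∧ ∀ h : ℝ, 0 < h → ∀ (t : ℝ) (φ : Vec d → ℝ) (p : Vec d → Vec d →L[ℝ] ℝ)
      (P : NNReal) (B M : ℝ), 0 ≤ M → LipschitzWith P φ → (∀ x, |φ x| ≤ B) →
      (∀ y z, |φ (y + z) - φ y - p y z| ≤ M * ‖z‖ ^ 2) →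
      ∀ x, |step F μ σ h t φ x - φ x| ≤ D * h * (1 + B + P + M) := by
  obtain ⟨L, hL, hl⟩ := hF.lipschitz
  obtain ⟨C₀, hC₀⟩ := hF.bound_at_zero
  have hm : 0 ≤ m := (norm_nonneg _).trans (hμb 0 0)
  have hs₀ : 0 ≤ s₀ := (norm_nonneg _).trans (hσb 0 0)
  have hs' : 0 ≤ s := (norm_nonneg _).trans (hs 0 0)
  have hC₀' : 0 ≤ C₀ := (abs_nonneg _).trans (hC₀ 0 0)
  obtain ⟨m₂, hm₂⟩ : ∃ m₂, m₂ = ∫ w, ‖w‖ ^ 2 ∂gaussVec d 1 := ⟨_, rfl⟩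
  obtain ⟨m₄, hm₄⟩ : ∃ m₄, m₄ = ∫ w, ‖w‖ ^ 4 ∂gaussVec d 1 := ⟨_, rfl⟩
  have hm₂0 : 0 ≤ m₂ := hm₂ ▸ integral_nonneg fun w => by positivity
  have hm₄0 : 0 ≤ m₄ := hm₄ ▸ integral_nonneg fun w => by positivity
  obtain ⟨a, ha⟩ : ∃ a, a = d * s₀ := ⟨_, rfl⟩
  obtain ⟨b, hb⟩ : ∃ b, b = d * s := ⟨_, rfl⟩
  obtain ⟨e, he⟩ : ∃ e, e = d * s ^ 2 := ⟨_, rfl⟩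
  have ha0 : 0 ≤ a := ha ▸ by positivity
  have hb0 : 0 ≤ b := hb ▸ by positivity
  have he0 : 0 ≤ e := he ▸ by positivity
  refine ⟨m + a ^ 2 * m₂ + C₀ + L * (1 + a * b * m₂ + a ^ 2 * (b ^ 2 * m₄ + e * m₂)),
    by positivity, fun h hh t φ p P B M hM hφL hφB hT x => ?_⟩
  have hB : 0 ≤ B := (abs_nonneg _).trans (hφB 0)
  have I2 : ∫ w, ‖w‖ ^ 2 ∂gaussVec d h = h * m₂ := by
    rw [integral_norm_pow hh.le, Real.sq_sqrt hh.le, hm₂]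
  have I4 : ∫ w, ‖w‖ ^ 4 ∂gaussVec d h = h ^ 2 * m₄ := by
    rw [integral_norm_pow hh.le, hm₄, show Real.sqrt h ^ 4 = (Real.sqrt h ^ 2) ^ 2 by ring,
      Real.sq_sqrt hh.le]
  have int2 := integrable_norm_pow d h 2 two_ne_zero
  have int4 := integrable_norm_pow d h 4 four_ne_zero
  obtain ⟨y, hy⟩ : ∃ y, y = x + h • μ t x := ⟨_, rfl⟩
  have hX : ∀ w, euler μ σ h t x w = y + (σ t x).mulVec w := fun w => by rw [hy]; rfl
  have hσw : ∀ w, ‖(σ t x).mulVec w‖ ≤ a * ‖w‖ := fun w => by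
    refine (norm_mulVec_le _ _).trans ?_
    rw [ha]
    gcongr
    exact hσb t x
  have hcφ : Continuous fun w : Vec d => φ (y + (σ t x).mulVec w) :=
    hφL.continuous.comp (by fun_prop)
  have hcp : Continuous fun w : Vec d => p y ((σ t x).mulVec w) :=
    (p y).continuous.comp (by fun_prop)
  have hcH2 : ∀ i j, Continuous fun w : Vec d => H2w σ h t x w i j := fun i j => by
    unfold H2w; fun_prop
  -- first and second order increments of `φ` along the Gaussian displacement
  have hinc1 : ∀ w, |φ (y + (σ t x).mulVec w) - φ y| ≤ P * (a * ‖w‖) := fun w => by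
    have := hφL.dist_le_mul (y + (σ t x).mulVec w) y
    rw [Real.dist_eq, dist_eq_norm, add_sub_cancel_left] at this
    exact this.trans (by gcongr; exact hσw w)
  have hinc2 : ∀ w, |φ (y + (σ t x).mulVec w) - φ y - p y ((σ t x).mulVec w)|
      ≤ M * a ^ 2 * ‖w‖ ^ 2 := fun w => by
    refine (hT y _).trans ?_
    calc M * ‖(σ t x).mulVec w‖ ^ 2 ≤ M * (a * ‖w‖) ^ 2 := by gcongr; exact hσw w
      _ = _ := by ring
  have iφ : Integrable (fun w => φ (y + (σ t x).mulVec w)) (gaussVec d h) :=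
    (integrable_const B).mono' hcφ.measurable.aestronglyMeasurable
      (Filter.Eventually.of_forall fun w => hφB _)
  have ip : Integrable (fun w => p y ((σ t x).mulVec w)) (gaussVec d h) := by
    refine ((integrable_norm_pow d h 1 one_ne_zero).const_mul (‖p y‖ * a)).mono'
      hcp.measurable.aestronglyMeasurable (Filter.Eventually.of_forall fun w => ?_)
    refine ((p y).le_opNorm _).trans ?_
    rw [pow_one, mul_assoc]
    gcongr
    exact hσw w
  have zp : ∫ w, p y ((σ t x).mulVec w) ∂gaussVec d h = 0 :=
    integral_odd fun w => by rw [Matrix.mulVec_neg, map_neg]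
  -- the conditional mean
  have E0 : |∫ w, φ (y + (σ t x).mulVec w) ∂gaussVec d h - φ x|
      ≤ P * (h * m) + M * a ^ 2 * (h * m₂) := by
    have h1 : ∫ w, (φ (y + (σ t x).mulVec w) - φ y - p y ((σ t x).mulVec w)) ∂gaussVec d h
        = ∫ w, φ (y + (σ t x).mulVec w) ∂gaussVec d h - φ y := by
      have ia : Integrable (fun w => φ (y + (σ t x).mulVec w) - φ y) (gaussVec d h) :=
        iφ.sub (integrable_const _)
      rw [integral_sub ia ip, zp, integral_sub iφ (integrable_const _)]
      simp
    have h2 : |∫ w, φ (y + (σ t x).mulVec w) ∂gaussVec d h - φ y| ≤ M * a ^ 2 * (h * m₂) := by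
      rw [← h1, ← I2, ← integral_const_mul, ← Real.norm_eq_abs]
      exact norm_integral_le_of_norm_le (int2.const_mul _) (Filter.Eventually.of_forall hinc2)
    have h3 : |φ y - φ x| ≤ P * (h * m) := by
      have := hφL.dist_le_mul y x
      rw [Real.dist_eq, dist_eq_norm, hy, add_sub_cancel_left, norm_smul,
        Real.norm_of_nonneg hh.le, ← hy] at this
      refine this.trans ?_
      gcongr
      exact hμb t x
    calc _ = |(∫ w, φ (y + (σ t x).mulVec w) ∂gaussVec d h - φ y) + (φ y - φ x)| := by
          congr 1; ring
      _ ≤ _ := abs_add_le _ _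
      _ ≤ _ := by linarith
  -- the discrete gradient
  have E1 : ∀ i, |∫ w, φ (y + (σ t x).mulVec w) * H1w σ h t x w i ∂gaussVec d h|
      ≤ P * (a * b * m₂) := fun i => by
    have i1 := integrable_H1w hs hh t x i
    have i2 : Integrable (fun w => φ (y + (σ t x).mulVec w) * H1w σ h t x w i) (gaussVec d h) :=
      i1.bdd_mul hcφ.measurable.aestronglyMeasurable (Filter.Eventually.of_forall fun w => hφB _)
    have h1 : ∫ w, φ (y + (σ t x).mulVec w) * H1w σ h t x w i ∂gaussVec d h
        = ∫ w, (φ (y + (σ t x).mulVec w) - φ y) * H1w σ h t x w i ∂gaussVec d h := by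
      simp only [sub_mul]
      rw [integral_sub i2 (i1.const_mul _), integral_const_mul, integral_H1w]
      ring
    have h2 : P * (a * b * m₂) = ∫ w, P * a * b / h * ‖w‖ ^ 2 ∂gaussVec d h := by
      rw [integral_const_mul, I2]
      field_simp
    rw [h1, h2, ← Real.norm_eq_abs]
    refine norm_integral_le_of_norm_le (int2.const_mul _) (Filter.Eventually.of_forall fun w => ?_)
    rw [norm_mul]
    calc _ ≤ (P * (a * ‖w‖)) * (b / h * ‖w‖) := by
          refine mul_le_mul (hinc1 w) ?_ (norm_nonneg _) (by positivity)
          rw [hb]; exact H1w_bound hs hh t x w i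
      _ = _ := by ring
  -- the discrete Hessian; the linear part integrates to zero by symmetry
  have E2 : ∀ i j, |∫ w, φ (y + (σ t x).mulVec w) * H2w σ h t x w i j ∂gaussVec d h|
      ≤ M * (a ^ 2 * (b ^ 2 * m₄ + e * m₂)) := fun i j => by
    have i1 := integrable_H2w hs hh t x i j
    have hbd : ∀ w, |H2w σ h t x w i j| ≤ b ^ 2 / h ^ 2 * ‖w‖ ^ 2 + e / h := fun w => by
      rw [hb, he]; exact H2w_bound hs hh t x w i j
    have i2 : Integrable (fun w => φ (y + (σ t x).mulVec w) * H2w σ h t x w i j) (gaussVec d h) :=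
      i1.bdd_mul hcφ.measurable.aestronglyMeasurable (Filter.Eventually.of_forall fun w => hφB _)
    have i3 : Integrable (fun w => p y ((σ t x).mulVec w) * H2w σ h t x w i j) (gaussVec d h) := by
      refine (((integrable_norm_pow d h 3 three_ne_zero).const_mul (‖p y‖ * a * (b ^ 2 / h ^ 2))).add
        ((integrable_norm_pow d h 1 one_ne_zero).const_mul (‖p y‖ * a * (e / h)))).mono'
        (hcp.mul (hcH2 i j)).measurable.aestronglyMeasurable
        (Filter.Eventually.of_forall fun w => ?_)
      rw [norm_mul]
      calc _ ≤ (‖p y‖ * (a * ‖w‖)) * (b ^ 2 / h ^ 2 * ‖w‖ ^ 2 + e / h) := by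
            refine mul_le_mul (((p y).le_opNorm _).trans ?_) (hbd w) (norm_nonneg _)
              (by positivity)
            gcongr
            exact hσw w
        _ = ‖p y‖ * a * (b ^ 2 / h ^ 2) * ‖w‖ ^ 3 + ‖p y‖ * a * (e / h) * ‖w‖ ^ 1 := by ring
    have z3 : ∫ w, p y ((σ t x).mulVec w) * H2w σ h t x w i j ∂gaussVec d h = 0 :=
      integral_odd fun w => by
        rw [Matrix.mulVec_neg, map_neg, H2w_eq σ hh.ne', H2w_eq σ hh.ne']
        simp [H1w, Matrix.mulVec_neg]
    have h1 : ∫ w, φ (y + (σ t x).mulVec w) * H2w σ h t x w i j ∂gaussVec d h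
        = ∫ w, (φ (y + (σ t x).mulVec w) - φ y - p y ((σ t x).mulVec w)) * H2w σ h t x w i j
          ∂gaussVec d h := by
      have i4 : Integrable (fun w => φ (y + (σ t x).mulVec w) * H2w σ h t x w i j
          - φ y * H2w σ h t x w i j) (gaussVec d h) := i2.sub (i1.const_mul _)
      simp only [sub_mul]
      rw [integral_sub i4 i3, z3, integral_sub i2 (i1.const_mul _),
        integral_const_mul, integral_H2w hh]
      ring
    have h2 : M * (a ^ 2 * (b ^ 2 * m₄ + e * m₂)) = ∫ w, (M * a ^ 2 * (b ^ 2 / h ^ 2) * ‖w‖ ^ 4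
        + M * a ^ 2 * (e / h) * ‖w‖ ^ 2) ∂gaussVec d h := by
      rw [integral_add (int4.const_mul _) (int2.const_mul _), integral_const_mul,
        integral_const_mul, I2, I4]
      field_simp
    rw [h1, h2, ← Real.norm_eq_abs]
    refine norm_integral_le_of_norm_le ((int4.const_mul _).add (int2.const_mul _))
      (Filter.Eventually.of_forall fun w => ?_)
    rw [norm_mul]
    calc _ ≤ (M * a ^ 2 * ‖w‖ ^ 2) * (b ^ 2 / h ^ 2 * ‖w‖ ^ 2 + e / h) :=
          mul_le_mul (hinc2 w) (hbd w) (abs_nonneg _) (by positivity)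
      _ = _ := by ring
  unfold step
  simp only [hX]
  set r := ∫ w, φ (y + (σ t x).mulVec w) ∂gaussVec d h with hr
  set q : Vec d := fun i => ∫ w, φ (y + (σ t x).mulVec w) * H1w σ h t x w i ∂gaussVec d h with hq
  set γ : Mat d := Matrix.of fun i j =>
    ∫ w, φ (y + (σ t x).mulVec w) * H2w σ h t x w i j ∂gaussVec d h with hγ
  have nr : |r| ≤ B := by
    have := norm_integral_le_of_norm_le_const (μ := gaussVec d h) (C := B)
      (f := fun w => φ (y + (σ t x).mulVec w))
      (Filter.Eventually.of_forall fun w => hφB (y + (σ t x).mulVec w))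
    simpa using this
  have nq : ‖q‖ ≤ P * (a * b * m₂) := (pi_norm_le_iff_of_nonneg (by positivity)).2 E1
  have nγ : ‖γ‖ ≤ M * (a ^ 2 * (b ^ 2 * m₄ + e * m₂)) :=
    (Matrix.norm_le_iff (by positivity)).2 E2
  have nF : |F t x r q γ| ≤ C₀ + L * (B + P * (a * b * m₂)
      + M * (a ^ 2 * (b ^ 2 * m₄ + e * m₂))) := by
    have h1 := hl t x x r 0 q 0 γ 0
    simp only [sub_self, norm_zero, sub_zero, zero_add] at h1
    have h2 : |F t x r q γ| ≤ |F t x r q γ - F t x 0 0 0| + |F t x 0 0 0| := by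
      have := abs_add_le (F t x r q γ - F t x 0 0 0) (F t x 0 0 0)
      rwa [sub_add_cancel] at this
    have h3 : L * (|r| + ‖q‖ + ‖γ‖) ≤ L * (B + P * (a * b * m₂)
      + M * (a ^ 2 * (b ^ 2 * m₄ + e * m₂))) := by gcongr
    linarith [hC₀ t x]
  obtain ⟨N, hN⟩ : ∃ N, N = 1 + B + P + M := ⟨_, rfl⟩
  have hP := P.coe_nonneg
  have N1 : 1 ≤ N := by linarith
  have NB : B ≤ N := by linarith
  have NP : (P : ℝ) ≤ N := by linarith
  have NM : M ≤ N := by linarith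
  have hN0 : 0 ≤ N := by linarith
  rw [← hN]
  calc |r + h * F t x r q γ - φ x| = |(r - φ x) + h * F t x r q γ| := by congr 1; ring
    _ ≤ |r - φ x| + |h * F t x r q γ| := abs_add_le _ _
    _ = |r - φ x| + h * |F t x r q γ| := by rw [abs_mul, abs_of_pos hh]
    _ ≤ (P * (h * m) + M * a ^ 2 * (h * m₂)) + h * (C₀ * 1 + L * (B + P * (a * b * m₂)
      + M * (a ^ 2 * (b ^ 2 * m₄ + e * m₂)))) := by rw [mul_one]; gcongr
    _ ≤ (N * (h * m) + N * a ^ 2 * (h * m₂)) + h * (C₀ * N + L * (N + N * (a * b * m₂)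
      + N * (a ^ 2 * (b ^ 2 * m₄ + e * m₂)))) := by gcongr
    _ = _ := by ring

/-! ### Iteration of the scheme -/

/-- Measurability of one step, needed because the stability estimate compares Bochner integrals of
the iterates; it uses that `F t` is jointly continuous, being Lipschitz. -/
theorem measurable_step {d : ℕ} {μ : ℝ → Vec d → Vec d} {σ : ℝ → Vec d → Mat d}
    {t : ℝ} (hμ : Continuous (μ t)) (hσ : Continuous (σ t))
    (hinv : ∀ s y, IsUnit (σ s y).det) {F : ℝ → Vec d → ℝ → Vec d → Mat d → ℝ}
    {L : ℝ} (hL : 0 ≤ L) (hl : ∀ t x x' r r' p p' γ γ',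
      |F t x r p γ - F t x' r' p' γ'| ≤ L * (‖x - x'‖ + |r - r'| + ‖p - p'‖ + ‖γ - γ'‖))
    {h : ℝ} (hh : h ≠ 0) {ψ : Vec d → ℝ} (hψ : Measurable ψ) :
    Measurable (step F μ σ h t ψ) := by
  have hX : Measurable fun q : Vec d × Vec d => ψ (euler μ σ h t q.1 q.2) :=
    hψ.comp (continuous_euler hμ hσ h).measurable
  have h0 : Measurable fun x => ∫ w, ψ (euler μ σ h t x w) ∂gaussVec d h :=
    (hX.stronglyMeasurable.integral_prod_right' (ν := gaussVec d h)).measurable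
  have h1 : ∀ i, Measurable fun x =>
      ∫ w, ψ (euler μ σ h t x w) * H1w σ h t x w i ∂gaussVec d h := fun i =>
    ((hX.mul (continuous_pi_iff.1 (continuous_H1w hσ hinv h)
      i).measurable).stronglyMeasurable.integral_prod_right' (ν := gaussVec d h)).measurable
  have h2 : ∀ i j, Measurable fun x =>
      ∫ w, ψ (euler μ σ h t x w) * H2w σ h t x w i j ∂gaussVec d h := fun i j =>
    ((hX.mul (continuous_H2w hσ hinv hh i
      j).measurable).stronglyMeasurable.integral_prod_right' (ν := gaussVec d h)).measurable
  have hFc : Continuous fun q : Vec d × ℝ × Vec d × (Fin d → Fin d → ℝ) =>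
      F t q.1 q.2.1 q.2.2.1 (Matrix.of q.2.2.2) := by
    refine (LipschitzWith.of_dist_le_mul (K := (4 * L).toNNReal) fun q q' => ?_).continuous
    rw [Real.coe_toNNReal _ (by positivity), Real.dist_eq, dist_eq_norm]
    refine (hl t _ _ _ _ _ _ _ _).trans ?_
    have a1 : ‖q.1 - q'.1‖ ≤ ‖q - q'‖ := norm_fst_le (q - q')
    have a0 : ‖q.2 - q'.2‖ ≤ ‖q - q'‖ := norm_snd_le (q - q')
    have a2 : |q.2.1 - q'.2.1| ≤ ‖q - q'‖ := (norm_fst_le (q.2 - q'.2)).trans a0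
    have a3 : ‖q.2.2 - q'.2.2‖ ≤ ‖q - q'‖ := (norm_snd_le (q.2 - q'.2)).trans a0
    have a4 : ‖q.2.2.1 - q'.2.2.1‖ ≤ ‖q - q'‖ := (norm_fst_le (q.2.2 - q'.2.2)).trans a3
    have a5 : ‖Matrix.of q.2.2.2 - Matrix.of q'.2.2.2‖ ≤ ‖q - q'‖ :=
      (norm_snd_le (q.2.2 - q'.2.2)).trans a3
    calc _ ≤ L * (‖q - q'‖ + ‖q - q'‖ + ‖q - q'‖ + ‖q - q'‖) := by gcongr
      _ = _ := by ring
  have hq : Measurable fun x : Vec d => (x, ∫ w, ψ (euler μ σ h t x w) ∂gaussVec d h,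
      (fun i => ∫ w, ψ (euler μ σ h t x w) * H1w σ h t x w i ∂gaussVec d h),
      (fun i j => ∫ w, ψ (euler μ σ h t x w) * H2w σ h t x w i j ∂gaussVec d h)) :=
    measurable_id.prodMk (h0.prodMk ((measurable_pi_iff.2 h1).prodMk
      (measurable_pi_iff.2 fun i => measurable_pi_iff.2 (h2 i))))
  have hFm := hFc.measurable.comp hq
  exact h0.add (hFm.const_mul h)

/-- Iterating stability and consistency: starting from an initial discrepancy `ρ` between `g` and the
test function `φ`, each step adds an error `h E` and amplifies by `1 + A h`. -/
theorem scheme_bound {d : ℕ} {T : ℝ} (hT : 0 < T) {μ : ℝ → Vec d → Vec d} {σ : ℝ → Vec d → Mat d}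
    {F : ℝ → Vec d → ℝ → Vec d → Mat d → ℝ} {g φ : Vec d → ℝ} {n : ℕ} (hn : 0 < n)
    {A E ρ : ℝ} (hA : 0 ≤ A) (hE : 0 ≤ E) (hρ : 0 ≤ ρ)
    (hmeas : ∀ t ψ, Measurable ψ → Measurable (step F μ σ (T / n) t ψ))
    (hstab : ∀ (t : ℝ) (ψ φ : Vec d → ℝ) (B M : ℝ),
      Measurable ψ → Measurable φ → (∀ x, |ψ x| ≤ B) → (∀ x, |φ x| ≤ B) →
      (∀ x, |ψ x - φ x| ≤ M) →
      ∀ x, |step F μ σ (T / n) t ψ x - step F μ σ (T / n) t φ x| ≤ (1 + A * (T / n)) * M)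
    (hcons : ∀ t x, |step F μ σ (T / n) t φ x - φ x| ≤ T / n * E)
    (hg : Measurable g) (hφ : Measurable φ) {B : ℝ} (hφB : ∀ x, |φ x| ≤ B)
    (hρg : ∀ x, |g x - φ x| ≤ ρ) (k : ℕ) :
    Measurable (schemeAux T F μ σ g n k) ∧ ∀ x, |schemeAux T F μ σ g n k x - φ x|
      ≤ (1 + A * (T / n)) ^ k * (ρ + k * (T / n) * E) := by
  have hh : 0 < T / n := by positivity
  induction k with
  | zero => exact ⟨hg, fun x => by simpa [schemeAux] using hρg x⟩
  | succ k ih =>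
    obtain ⟨ihm, ihb⟩ := ih
    refine ⟨hmeas _ _ ihm, fun x => ?_⟩
    set a := (1 + A * (T / n)) ^ k * (ρ + k * (T / n) * E) with ha
    have ha0 : 0 ≤ a := by positivity
    have h1 := hstab (T - (k + 1) * (T / n)) (schemeAux T F μ σ g n k) φ (a + B) a ihm hφ
      (fun y => by
        have h2 := abs_add_le (schemeAux T F μ σ g n k y - φ y) (φ y)
        rw [sub_add_cancel] at h2
        linarith [ihb y, hφB y])
      (fun y => by linarith [hφB y]) ihb x
    have h3 := hcons (T - (k + 1) * (T / n)) x
    have h4 : |schemeAux T F μ σ g n (k + 1) x - φ x| ≤ (1 + A * (T / n)) * a + T / n * E := by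
      refine (abs_sub_le _ (step F μ σ (T / n) (T - (k + 1) * (T / n)) φ x) _).trans ?_
      exact add_le_add h1 h3
    refine h4.trans ?_
    have h5 : 1 ≤ (1 + A * (T / n)) ^ (k + 1) :=
      one_le_pow₀ (by linarith [mul_nonneg hA hh.le])
    have h6 : T / n * E ≤ (1 + A * (T / n)) ^ (k + 1) * (T / n * E) :=
      le_mul_of_one_le_left (by positivity) h5
    calc _ ≤ (1 + A * (T / n)) * a + (1 + A * (T / n)) ^ (k + 1) * (T / n * E) := by gcongr
      _ = _ := by rw [ha]; push_cast; ring

/-- Convergence to the terminal condition (Lemma 3.20 of the paper):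
`|v^h(t_k, x) − g(x)| ≤ C (T − t_k)^{1/2}` with `C` independent of `n`. -/
theorem scheme_terminal_condition
    (d : ℕ) (T : ℝ) (hT : 0 < T)
    (μ : ℝ → Vec d → Vec d) (σ : ℝ → Vec d → Mat d)
    (hμbdd : ∃ C : ℝ, ∀ s y, ‖μ s y‖ ≤ C)
    (hσbdd : ∃ C : ℝ, ∀ s y, ‖σ s y‖ ≤ C)
    (hμreg : ∃ L : ℝ, ∀ s s' : ℝ, ∀ y y' : Vec d,
      ‖μ s y - μ s' y'‖ ≤ L * (‖y - y'‖ + Real.sqrt |s - s'|))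
    (hσreg : ∃ L : ℝ, ∀ s s' : ℝ, ∀ y y' : Vec d,
      ‖σ s y - σ s' y'‖ ≤ L * (‖y - y'‖ + Real.sqrt |s - s'|))
    (hσinv : ∀ s y, IsUnit (σ s y).det)
    (hσinvbdd : ∃ C : ℝ, ∀ s y, ‖(σ s y)⁻¹‖ ≤ C)
    (F Fr : ℝ → Vec d → ℝ → Vec d → Mat d → ℝ)
    (Fp : ℝ → Vec d → ℝ → Vec d → Mat d → Vec d)
    (Fγ : ℝ → Vec d → ℝ → Vec d → Mat d → Mat d)
    (hF : AssumptionF d σ F Fr Fp Fγ)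
    (g : Vec d → ℝ) (hgbdd : ∃ Cg : ℝ, ∀ x, |g x| ≤ Cg)
    (hglip : ∃ Lg : NNReal, LipschitzWith Lg g) :
    ∃ C > (0 : ℝ), ∀ n : ℕ, 0 < n → ∀ k : ℕ, k ≤ n → ∀ x : Vec d,
      |vh T F μ σ g n k x - g x| ≤ C * Real.sqrt (T - k * (T / n)) := by
  obtain ⟨m, hm⟩ := hμbdd
  obtain ⟨s₀, hs₀⟩ := hσbdd
  obtain ⟨s, hs⟩ := hσinvbdd
  obtain ⟨Lμ, hLμ⟩ := hμreg
  obtain ⟨Lσ, hLσ⟩ := hσreg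
  obtain ⟨Cg, hCg⟩ := hgbdd
  obtain ⟨Lg, hLg⟩ := hglip
  have hμc : ∀ t, Continuous (μ t) := fun t => by
    refine (LipschitzWith.of_dist_le_mul (K := Lμ.toNNReal) fun y y' => ?_).continuous
    have h1 := hLμ t t y y'
    rw [sub_self, abs_zero, Real.sqrt_zero, add_zero] at h1
    rw [dist_eq_norm, dist_eq_norm]
    exact h1.trans (by gcongr; exact Real.le_coe_toNNReal Lμ)
  have hσc : ∀ t, Continuous (σ t) := fun t => by
    refine (LipschitzWith.of_dist_le_mul (K := Lσ.toNNReal) fun y y' => ?_).continuous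
    have h1 := hLσ t t y y'
    rw [sub_self, abs_zero, Real.sqrt_zero, add_zero] at h1
    rw [dist_eq_norm, dist_eq_norm]
    exact h1.trans (by gcongr; exact Real.le_coe_toNNReal Lσ)
  obtain ⟨L, hL, hl⟩ := hF.lipschitz
  obtain ⟨A, hA, hstab⟩ := step_stable hμc hσc hs hF
  obtain ⟨D, hD, hcons⟩ := step_consistent hm hs₀ hs hF
  obtain ⟨c, hc, hmoll⟩ := exists_scaled_mollifier d
  have hCg0 : 0 ≤ Cg := (abs_nonneg _).trans (hCg 0)
  have hLg0 := Lg.coe_nonneg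
  obtain ⟨B, hB⟩ : ∃ B, B = Cg + 2 * Lg * Real.sqrt T := ⟨_, rfl⟩
  have hB0 : 0 ≤ B := by rw [hB]; positivity
  refine ⟨Real.exp (A * T) * (2 * Lg + Real.sqrt T * (D * (1 + B + Lg)) + D * c * Lg)
    + 2 * Lg + 1, by positivity, fun n hn k hk x => ?_⟩
  have hn' : (0 : ℝ) < n := Nat.cast_pos.2 hn
  have hh : 0 < T / n := by positivity
  obtain ⟨j, hj⟩ : ∃ j, j = n - k := ⟨_, rfl⟩
  have hjk : (j : ℝ) = n - k := by rw [hj, Nat.cast_sub hk]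
  have hjT : T - k * (T / n) = j * (T / n) := by
    rw [hjk]; field_simp
  have hjT' : j * (T / n) ≤ T := by
    rw [← hjT]
    have : 0 ≤ k * (T / n) := by positivity
    linarith
  unfold vh
  rw [hjT, ← hj]
  rcases Nat.eq_zero_or_pos j with rfl | hj0
  · simp [schemeAux]
  have hτ : 0 < j * (T / n) := by positivity
  -- the mollification scale is the square root of the time to maturity
  obtain ⟨ε, hε⟩ : ∃ ε, ε = Real.sqrt (j * (T / n)) := ⟨_, rfl⟩
  have hε0 : 0 < ε := hε ▸ Real.sqrt_pos.2 hτ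
  have hε2 : j * (T / n) = ε ^ 2 := by rw [hε, Real.sq_sqrt hτ.le]
  have hεT : ε ≤ Real.sqrt T := hε ▸ Real.sqrt_le_sqrt hjT'
  obtain ⟨φ, p, hφL, hφg, -, hφT⟩ := hmoll Lg g hLg ε hε0
  have hφB : ∀ y, |φ y| ≤ B := fun y => by
    have h1 := abs_add_le (φ y - g y) (g y)
    rw [sub_add_cancel] at h1
    have h2 : 2 * (Lg : ℝ) * ε ≤ 2 * Lg * Real.sqrt T := by gcongr
    linarith [hφg y, hCg y]
  have hM0 : 0 ≤ c * Lg / ε := by positivity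
  have hb := (scheme_bound hT hn (A := A) (E := D * (1 + B + Lg + c * Lg / ε)) (ρ := 2 * Lg * ε)
    hA (by positivity) (by positivity)
    (fun t ψ hψ => measurable_step (hμc t) (hσc t) hσinv hL hl hh.ne' hψ)
    (hstab _ hh)
    (fun t y => (hcons _ hh t φ p Lg B _ hM0 hφL hφB hφT y).trans_eq (by ring))
    hLg.continuous.measurable hφL.continuous.measurable hφB
    (fun y => by rw [abs_sub_comm]; exact hφg y) j).2 x
  have hexp : (1 + A * (T / n)) ^ j ≤ Real.exp (A * T) := by
    calc (1 + A * (T / n)) ^ j ≤ Real.exp (A * (T / n)) ^ j := by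
          gcongr
          linarith [Real.add_one_le_exp (A * (T / n))]
      _ = Real.exp (A * (j * (T / n))) := by rw [← Real.exp_nat_mul]; congr 1; ring
      _ ≤ _ := by gcongr
  rw [← hε]
  have hin : 2 * Lg * ε + j * (T / n) * (D * (1 + B + Lg + c * Lg / ε))
      ≤ (2 * Lg + Real.sqrt T * (D * (1 + B + Lg)) + D * c * Lg) * ε := by
    have e1 : 2 * Lg * ε + j * (T / n) * (D * (1 + B + Lg + c * Lg / ε))
        = (2 * Lg + ε * (D * (1 + B + Lg)) + D * c * Lg) * ε := by
      rw [hε2]; field_simp; ring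
    rw [e1]
    gcongr
  calc |schemeAux T F μ σ g n j x - g x|
      ≤ |schemeAux T F μ σ g n j x - φ x| + |φ x - g x| := abs_sub_le _ _ _
    _ ≤ Real.exp (A * T) * ((2 * Lg + Real.sqrt T * (D * (1 + B + Lg)) + D * c * Lg) * ε)
        + 2 * Lg * ε := by
      refine add_le_add (hb.trans ?_) (hφg x)
      gcongr
    _ ≤ _ := by nlinarith

end
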